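/- arXiv:1509.05322 — 9 statements merged into one kernel-verified Lean document; each statement's English description precedes it below -/
import Mathlib

section
/- Every symmetric additively-separable hedonic game possesses a Nash-stable outcome, i.e., for every finite player set V and symmetric weight function w there exists a partition p of V such that no player has a Nash-feasible deviation. -/
/-!
The total utility `∑ a, u_p(a) = ∑ a, ∑ b, [p a = p b] w a b` is an exact potential up to a factor
of two: when a single player `i` moves to coalition `k`, only the pairs containing `i` change, and by
symmetry each such change is counted twice, so the total utility changes by twice the gain of `i`
(`welfare_update`). The total utility depends only on which pairs of players share a coalition, so it
takes finitely many values even though there are infinitely many labellings. A labelling attaining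
the largest value is Nash stable.
-/


/-!
A symmetric additively-separable hedonic game is given by a finite player set `V`
and a symmetric weight function `w : V → V → ℝ` with `w i i = 0`.
An outcome (partition of `V`) is encoded as a labelling `p : V → ℕ`: the coalition
of `i` is the fibre `{j | p j = p i}`.  A deviation of player `i` is the choice of a
label `k ≠ p i`: if the fibre of `k` is nonempty it is a block of `p` other than
`p(i)`, and if it is empty it is the empty target coalition (an unused label always
exists since `V` is finite).  `coalSum w p i k` is the total weight from `i` to the
members of the coalition labelled `k` (excluding `i`); in particular
`coalSum w p i (p i)` is the utility of `i` under `p`.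
-/

/-- Sum of weights from player `i` to the members of the coalition labelled `k`
(excluding `i` herself). -/
def coalSum {V Λ : Type*} [Fintype V] [DecidableEq V] [DecidableEq Λ]
    (w : V → V → ℝ) (p : V → Λ) (i : V) (k : Λ) : ℝ :=
  ∑ j ∈ Finset.univ.filter (fun j => p j = k ∧ j ≠ i), w i j

/-- The total utility of the outcome `p`, as a sum over ordered pairs of players with equal labels.
The diagonal is included; it contributes the same amount for every `p`. -/
def welfare {V : Type*} [Fintype V] (w : V → V → ℝ) (p : V → ℕ) : ℝ :=
  ∑ a, ∑ b, if p a = p b then w a b else 0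

theorem coalSum_eq_sum_ite {V : Type*} [Fintype V] [DecidableEq V]
    (w : V → V → ℝ) (p : V → ℕ) (i : V) (k : ℕ) :
    coalSum w p i k = ∑ j, if p j = k ∧ j ≠ i then w i j else 0 := by
  rw [coalSum, Finset.sum_filter]

/-- A unilateral move of player `i` to coalition `k` changes the total utility by twice the change
in the utility of `i`. -/
theorem welfare_update {V : Type*} [Fintype V] [DecidableEq V]
    (w : V → V → ℝ) (hsymm : ∀ i j, w i j = w j i) (p : V → ℕ) (i : V) (k : ℕ) :
    welfare w (Function.update p i k) - welfare w p =
      2 * (coalSum w p i k - coalSum w p i (p i)) := by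
  -- `g b` is the change in the contribution of the ordered pair `(i, b)`.
  set g : V → ℝ := fun b =>
    (if p b = k ∧ b ≠ i then w i b else 0) - (if p b = p i ∧ b ≠ i then w i b else 0) with hg
  have hpair : ∀ a b : V,
      (if Function.update p i k a = Function.update p i k b then w a b else 0) -
        (if p a = p b then w a b else 0) =
      (if a = i then g b else 0) + (if b = i then g a else 0) := by
    intro a b
    by_cases ha : a = i
    · subst ha
      by_cases hb : b = a
      · subst hb
        simp [hg]
      · have hab : a ≠ b := Ne.symm hb
        simp [hg, hb, hab, eq_comm]
    · by_cases hb : b = i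
      · subst hb
        simp [hg, ha, hsymm a b]
      · simp [ha, hb]
  have hgsum : ∑ b, g b = coalSum w p i k - coalSum w p i (p i) := by
    rw [coalSum_eq_sum_ite, coalSum_eq_sum_ite, ← Finset.sum_sub_distrib]
  rw [← hgsum]
  simp only [welfare, ← Finset.sum_sub_distrib, hpair]
  simp only [Finset.sum_add_distrib, Finset.sum_ite_eq', Finset.mem_univ, if_true]
  rw [Finset.sum_comm]
  simp only [Finset.sum_ite_eq', Finset.mem_univ, if_true]
  ring

/-- The total utility factors through the relation of sharing a coalition, which is one of finitely
many relations on `V`. -/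
theorem finite_range_welfare {V : Type*} [Fintype V] (w : V → V → ℝ) :
    (Set.range (welfare w)).Finite := by
  classical
  refine (Set.finite_range
    (fun r : V → V → Prop => ∑ a, ∑ b, if r a b then w a b else 0)).subset ?_
  rintro _ ⟨p, rfl⟩
  exact ⟨fun a b => p a = p b, by
    unfold welfare
    refine Finset.sum_congr rfl fun a _ => Finset.sum_congr rfl fun b _ => ?_
    congr⟩

/-- Every symmetric additively-separable hedonic game possesses a
Nash-stable outcome: there is a partition `p` of `V` such that no player `i` has a
Nash-feasible deviation, i.e. for every target coalition (label `k ≠ p i`) the total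
weight of `i` to the target does not exceed her current utility. -/
theorem exists_nash_stable (V : Type*) [Fintype V] [DecidableEq V]
    (w : V → V → ℝ) (hsymm : ∀ i j, w i j = w j i) (hzero : ∀ i, w i i = 0) :
    ∃ p : V → ℕ, ∀ (i : V) (k : ℕ), k ≠ p i →
      ¬ coalSum w p i (p i) < coalSum w p i k := by
  obtain ⟨_, ⟨p, rfl⟩, hmax⟩ :=
    Set.exists_max_image _ id (finite_range_welfare w) (Set.range_nonempty _)
  refine ⟨p, fun i k _ hlt => ?_⟩
  have hle : welfare w (Function.update p i k) ≤ welfare w p := hmax _ ⟨_, rfl⟩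
  have hgain := welfare_update w hsymm p i k
  linarith
end

section
/- In a symmetric additively-separable hedonic game, any outcome p that maximizes the total happiness Φ₀(p) = Σ_{i ∈ V} u_p(i) over all partitions of V is Nash stable. -/
/-- The total happiness `Φ₀(p) = Σ_i u_p(i)` of an outcome `p`. -/
def totalHappiness {V : Type*} [Fintype V] [DecidableEq V]
    (w : V → V → ℝ) (p : V → ℕ) : ℝ :=
  ∑ i, coalSum w p i (p i)

/-- The utility that the players other than `i` derive from one another under `p`: the part of the
total happiness which a deviation of `i` leaves unchanged. -/
def happinessWithout {V : Type*} [Fintype V] [DecidableEq V]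
    (w : V → V → ℝ) (p : V → ℕ) (i : V) : ℝ :=
  ∑ a ∈ Finset.univ.erase i, ∑ b ∈ Finset.univ.erase i, if p b = p a ∧ b ≠ a then w a b else 0

/-- The pairs involving `i` contribute to `Φ₀` twice the utility of `i`: once from `i` and, by
symmetry of `w`, once more from her coalition mates. -/
theorem totalHappiness_eq_two_mul_add {V : Type*} [Fintype V] [DecidableEq V]
    (w : V → V → ℝ) (hsymm : ∀ i j, w i j = w j i) (p : V → ℕ) (i : V) :
    totalHappiness w p = 2 * coalSum w p i (p i) + happinessWithout w p i := by
  have h_split (a : V) : coalSum w p a (p a) =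
      (if p i = p a ∧ i ≠ a then w a i else 0) +
        ∑ b ∈ Finset.univ.erase i, if p b = p a ∧ b ≠ a then w a b else 0 := by
    rw [coalSum, Finset.sum_filter]
    exact (Finset.add_sum_erase _ (fun b => if p b = p a ∧ b ≠ a then w a b else 0)
      (Finset.mem_univ i)).symm
  have h_mates : ∑ a ∈ Finset.univ.erase i, (if p i = p a ∧ i ≠ a then w a i else 0) =
      coalSum w p i (p i) := by
    rw [h_split i, if_neg (by simp), zero_add]
    refine Finset.sum_congr rfl fun a _ => ?_
    rw [hsymm a i]
    simp only [eq_comm, ne_comm]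
  rw [totalHappiness, ← Finset.add_sum_erase _ _ (Finset.mem_univ i),
    Finset.sum_congr rfl fun a _ => h_split a, Finset.sum_add_distrib, h_mates, happinessWithout]
  ring

theorem happinessWithout_update {V : Type*} [Fintype V] [DecidableEq V]
    (w : V → V → ℝ) (p : V → ℕ) (i : V) (k : ℕ) :
    happinessWithout w (Function.update p i k) i = happinessWithout w p i := by
  refine Finset.sum_congr rfl fun a ha => Finset.sum_congr rfl fun b hb => ?_
  rw [Function.update_of_ne (Finset.ne_of_mem_erase ha),
    Function.update_of_ne (Finset.ne_of_mem_erase hb)]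

/-- The weight from `i` to a coalition does not depend on where `i` herself sits. -/
theorem coalSum_update {V : Type*} [Fintype V] [DecidableEq V]
    (w : V → V → ℝ) (p : V → ℕ) (i : V) (k l : ℕ) :
    coalSum w (Function.update p i k) i l = coalSum w p i l := by
  refine Finset.sum_congr (Finset.filter_congr fun j _ => ?_) fun _ _ => rfl
  exact and_congr_left fun hj => by rw [Function.update_of_ne hj]

/-- any outcome maximizing the total happiness `Φ₀` over all
partitions of `V` is Nash stable. -/
theorem maxTotalHappiness_nashStable (V : Type*) [Fintype V] [DecidableEq V]
    (w : V → V → ℝ) (hsymm : ∀ i j, w i j = w j i) (hzero : ∀ i, w i i = 0)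
    (p : V → ℕ) (hmax : ∀ q : V → ℕ, totalHappiness w q ≤ totalHappiness w p) :
    ∀ (i : V) (k : ℕ), k ≠ p i →
      ¬ coalSum w p i (p i) < coalSum w p i k := by
  intro i k _ hlt
  have h := hmax (Function.update p i k)
  rw [totalHappiness_eq_two_mul_add w hsymm p i, totalHappiness_eq_two_mul_add w hsymm _ i,
    happinessWithout_update, coalSum_update, Function.update_self] at h
  linarith
end

section
/- In a symmetric additively-separable hedonic game with integer weights, every sequence of outcomes p₀, p₁, …, p_L in which each p_{t+1} is obtained from p_t by a Nash-feasible deviation of some player has length L at most 2·W, where W = Σ_{{i,j}} |w(i,j)| is the sum of absolute edge weights over unordered pairs of distinct players. -/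
/-!
Integer-weighted symmetric additively-separable hedonic game.  Partitions of the
finite player set `V` are encoded as labellings `p : V → ℕ` (fibres are the
coalitions).  A deviation of player `i` to the target coalition labelled `k ≠ p i`
produces the outcome `Function.update p i k`.
-/

/-- Sum of weights from player `i` to the members of the coalition labelled `k`
(excluding `i` herself); `coalSumZ w p i (p i)` is the utility of `i` under `p`. -/
def coalSumZ {V Λ : Type*} [Fintype V] [DecidableEq V] [DecidableEq Λ]
    (w : V → V → ℤ) (p : V → Λ) (i : V) (k : Λ) : ℤ :=
  ∑ j ∈ Finset.univ.filter (fun j => p j = k ∧ j ≠ i), w i j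

/-!
The total `Φ p` of `w a b` over ordered pairs `(a, b)` of players sharing a coalition is a potential:
by symmetry and `w i i = 0`, it is twice the utility of any given player `i` plus a term independent
of where `i` sits (`potentialZ_eq`). A Nash-feasible deviation therefore raises `Φ` by twice an
integer gain, hence by at least `2`. Since `|Φ p| ≤ ∑ i, ∑ j, |w i j|` for every outcome, `L` steps
give `2 * L ≤ 2 * ∑ i, ∑ j, |w i j|`.
-/

/-- The sum of `w a b` over ordered pairs of players in the same coalition of `p`, i.e. the sum of
all utilities when `w` vanishes on the diagonal. -/
def potentialZ {V Λ : Type*} [Fintype V] [DecidableEq Λ]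
    (w : V → V → ℤ) (p : V → Λ) : ℤ :=
  ∑ a : V, ∑ b : V, if p a = p b then w a b else 0

lemma coalSumZ_eq_sum_erase {V Λ : Type*} [Fintype V] [DecidableEq V] [DecidableEq Λ]
    (w : V → V → ℤ) (p : V → Λ) (i : V) (k : Λ) :
    coalSumZ w p i k = ∑ j ∈ Finset.univ.erase i, if p j = k then w i j else 0 := by
  unfold coalSumZ
  rw [← Finset.sum_filter]
  congr 1
  ext j
  simp [and_comm]

/-- The last sum does not involve player `i`, so it is unchanged when `i` deviates. -/
lemma potentialZ_eq {V Λ : Type*} [Fintype V] [DecidableEq V] [DecidableEq Λ]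
    (w : V → V → ℤ) (hsymm : ∀ i j, w i j = w j i) (hzero : ∀ i, w i i = 0)
    (p : V → Λ) (i : V) :
    potentialZ w p = 2 * coalSumZ w p i (p i) +
      ∑ a ∈ Finset.univ.erase i, ∑ b ∈ Finset.univ.erase i, if p a = p b then w a b else 0 := by
  have hsplit (f : V → ℤ) : ∑ a, f a = f i + ∑ a ∈ Finset.univ.erase i, f a :=
    (Finset.add_sum_erase _ _ (Finset.mem_univ i)).symm
  simp only [potentialZ, hsplit, Finset.sum_add_distrib, hzero, coalSumZ_eq_sum_erase,
    fun a => hsymm a i, @eq_comm _ (p i), ite_self]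
  ring

lemma coalSumZ_update {V Λ : Type*} [Fintype V] [DecidableEq V] [DecidableEq Λ]
    (w : V → V → ℤ) (p : V → Λ) (i : V) (k l : Λ) :
    coalSumZ w (Function.update p i k) i l = coalSumZ w p i l := by
  simp only [coalSumZ_eq_sum_erase]
  refine Finset.sum_congr rfl fun j hj => ?_
  rw [Function.update_of_ne (Finset.ne_of_mem_erase hj)]

/-- A deviation changes the potential by exactly twice the deviator's change in utility. -/
lemma potentialZ_update {V Λ : Type*} [Fintype V] [DecidableEq V] [DecidableEq Λ]
    (w : V → V → ℤ) (hsymm : ∀ i j, w i j = w j i) (hzero : ∀ i, w i i = 0)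
    (p : V → Λ) (i : V) (k : Λ) :
    potentialZ w (Function.update p i k) =
      potentialZ w p + 2 * (coalSumZ w p i k - coalSumZ w p i (p i)) := by
  have hrest : (∑ a ∈ Finset.univ.erase i, ∑ b ∈ Finset.univ.erase i,
      if Function.update p i k a = Function.update p i k b then w a b else 0) =
      ∑ a ∈ Finset.univ.erase i, ∑ b ∈ Finset.univ.erase i, if p a = p b then w a b else 0 := by
    refine Finset.sum_congr rfl fun a ha => Finset.sum_congr rfl fun b hb => ?_
    rw [Function.update_of_ne (Finset.ne_of_mem_erase ha),
      Function.update_of_ne (Finset.ne_of_mem_erase hb)]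
  rw [potentialZ_eq w hsymm hzero _ i, potentialZ_eq w hsymm hzero p i, hrest,
    Function.update_self, coalSumZ_update]
  ring

lemma abs_potentialZ_le {V Λ : Type*} [Fintype V] [DecidableEq Λ]
    (w : V → V → ℤ) (p : V → Λ) : |potentialZ w p| ≤ ∑ i : V, ∑ j : V, |w i j| := by
  refine (Finset.abs_sum_le_sum_abs _ _).trans (Finset.sum_le_sum fun a _ => ?_)
  refine (Finset.abs_sum_le_sum_abs _ _).trans (Finset.sum_le_sum fun b _ => ?_)
  split_ifs <;> simp

/-- with integer weights, any sequence of outcomes in which each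
outcome arises from the previous one by a Nash-feasible deviation has length at
most `2·W`, where `W` is the sum of `|w i j|` over unordered pairs of distinct
players.  (Since `w i i = 0` and `w` is symmetric, `2·W = Σ_i Σ_j |w i j|`.) -/
theorem nash_improvement_sequence_length (V : Type*) [Fintype V] [DecidableEq V]
    (w : V → V → ℤ) (hsymm : ∀ i j, w i j = w j i) (hzero : ∀ i, w i i = 0)
    (L : ℕ) (p : ℕ → V → ℕ)
    (hstep : ∀ t < L, ∃ (i : V) (k : ℕ), k ≠ p t i ∧
        coalSumZ w (p t) i (p t i) < coalSumZ w (p t) i k ∧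
        p (t + 1) = Function.update (p t) i k) :
    (L : ℤ) ≤ ∑ i : V, ∑ j : V, |w i j| := by
  have hgrow : ∀ t ≤ L, potentialZ w (p 0) + 2 * (t : ℤ) ≤ potentialZ w (p t) := by
    intro t
    induction t with
    | zero => simp
    | succ t ih =>
      intro ht
      obtain ⟨i, k, -, hlt, hp⟩ := hstep t ht
      have hprev := ih (by omega)
      rw [hp, potentialZ_update w hsymm hzero]
      push_cast
      linarith [Int.add_one_le_of_lt hlt]
  have hL := hgrow L le_rfl
  have h0 := abs_le.1 (abs_potentialZ_le w (p 0))
  have h1 := abs_le.1 (abs_potentialZ_le w (p L))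
  linarith
end

section
/- In a symmetric additively-separable hedonic game, consider any sequence of outcomes p₀, p₁, …, p_L starting from the all-singleton partition p₀, in which each p_{t+1} is obtained from p_t by a deviation of a player i to a target coalition c that is (a) Nash feasible, (b) veto-in feasible, i.e., w(i,j) > 0 for every j ∈ c with w(i,j) ≠ 0, and (c) allowed to leave, i.e., either p_t(i) = {i} or there exists j ∈ p_t(i) \ {i} with w(i,j) < 0. Then in every outcome p_t of the sequence, any two distinct players i, j in the same coalition with w(i,j) ≠ 0 satisfy w(i,j) > 0, and the length of the sequence satisfies L ≤ |V|. -/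
/-- If all nonzero edges inside coalitions are positive, the leaving condition can
only hold through its first alternative: the deviator is alone. -/
theorem leave_singleton {V : Type*} {w : V → V → ℝ} {q : V → ℕ} {i : V}
    (hpos : ∀ i j : V, i ≠ j → q i = q j → w i j ≠ 0 → 0 < w i j)
    (hleave : (∀ j : V, q j = q i → j = i) ∨ ∃ j : V, j ≠ i ∧ q j = q i ∧ w i j < 0) :
    ∀ j : V, q j = q i → j = i := by
  rcases hleave with h | ⟨j, hji, hq, hneg⟩
  · exact h
  · exact absurd (hpos i j hji.symm hq.symm hneg.ne) hneg.not_gt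

/-- Veto-in feasible moves preserve positivity of the nonzero edges inside coalitions;
symmetry transfers the deviator's condition to the edges seen from the other side. -/
theorem pos_update {V : Type*} [DecidableEq V] {w : V → V → ℝ}
    (hsymm : ∀ i j, w i j = w j i) {q : V → ℕ} {i : V} {k : ℕ}
    (hpos : ∀ i j : V, i ≠ j → q i = q j → w i j ≠ 0 → 0 < w i j)
    (hveto : ∀ j : V, q j = k → j ≠ i → w i j ≠ 0 → 0 < w i j) :
    ∀ a b : V, a ≠ b → Function.update q i k a = Function.update q i k b →
      w a b ≠ 0 → 0 < w a b := by
  intro a b hab h hw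
  by_cases ha : a = i
  · subst ha
    rw [Function.update_self, Function.update_of_ne hab.symm] at h
    exact hveto b h.symm hab.symm hw
  · by_cases hb : b = i
    · subst hb
      rw [Function.update_self, Function.update_of_ne hab] at h
      rw [hsymm] at hw ⊢
      exact hveto a h hab hw
    · rw [Function.update_of_ne ha, Function.update_of_ne hb] at h
      exact hpos a b hab h hw

/-- A singleton player has utility `0`, so a Nash feasible target has positive weight and
hence is nonempty. The move therefore merges two blocks, and the number of blocks drops. -/
theorem card_image_update_lt {V : Type*} [Fintype V] [DecidableEq V] (w : V → V → ℝ)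
    {q : V → ℕ} {i : V} {k : ℕ} (hk : k ≠ q i)
    (hsingle : ∀ j : V, q j = q i → j = i)
    (hnash : coalSum w q i (q i) < coalSum w q i k) :
    (Finset.univ.image (Function.update q i k)).card < (Finset.univ.image q).card := by
  have hzero : coalSum w q i (q i) = 0 := by
    refine Finset.sum_eq_zero fun j hj => ?_
    obtain ⟨hq, hji⟩ := (Finset.mem_filter.mp hj).2
    exact absurd (hsingle j hq) hji
  have hne : coalSum w q i k ≠ 0 := by rw [hzero] at hnash; exact hnash.ne'
  obtain ⟨m, hm, -⟩ := Finset.exists_ne_zero_of_sum_ne_zero hne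
  have hmk : q m = k := (Finset.mem_filter.mp hm).2.1
  -- The label `q i` is vacated, and the new label `k = q m` was already in use.
  refine Finset.card_lt_card ((Finset.ssubset_iff_of_subset ?_).2 ⟨q i, by simp, ?_⟩)
  · intro x hx
    obtain ⟨a, -, rfl⟩ := Finset.mem_image.mp hx
    by_cases ha : a = i
    · subst ha
      rw [Function.update_self, ← hmk]
      simp
    · rw [Function.update_of_ne ha]
      simp
  · intro hx
    obtain ⟨a, -, ha⟩ := Finset.mem_image.mp hx
    by_cases hai : a = i
    · subst hai
      exact hk (by simpa using ha)
    · rw [Function.update_of_ne hai] at ha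
      exact hai (hsingle a ha)

/-- starting from the all-singleton partition, under deviations that
are Nash feasible, veto-in feasible, and allowed to leave (the deviator's current
coalition is a singleton or contains a negative edge to her), every outcome of the
sequence has only positive nonzero edges inside coalitions, and the sequence has
length at most `|V|`. -/
theorem vetoIn_from_singletons (V : Type*) [Fintype V] [DecidableEq V]
    (w : V → V → ℝ) (hsymm : ∀ i j, w i j = w j i) (hzero : ∀ i, w i i = 0)
    (L : ℕ) (p : ℕ → V → ℕ)
    (hinit : Function.Injective (p 0))
    (hstep : ∀ t < L, ∃ (i : V) (k : ℕ), k ≠ p t i ∧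
        -- (a) Nash feasible
        coalSum w (p t) i (p t i) < coalSum w (p t) i k ∧
        -- (b) veto-in feasible
        (∀ j : V, p t j = k → j ≠ i → w i j ≠ 0 → 0 < w i j) ∧
        -- (c) allowed to leave
        ((∀ j : V, p t j = p t i → j = i) ∨
          ∃ j : V, j ≠ i ∧ p t j = p t i ∧ w i j < 0) ∧
        p (t + 1) = Function.update (p t) i k) :
    (∀ t ≤ L, ∀ i j : V, i ≠ j → p t i = p t j → w i j ≠ 0 → 0 < w i j) ∧
      L ≤ Fintype.card V := by
  have hinv : ∀ t ≤ L, (∀ i j : V, i ≠ j → p t i = p t j → w i j ≠ 0 → 0 < w i j) ∧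
      (Finset.univ.image (p t)).card + t ≤ Fintype.card V := by
    intro t
    induction t with
    | zero =>
      exact fun _ => ⟨fun i j hij h => absurd (hinit h) hij, Finset.card_image_le⟩
    | succ t ih =>
      intro ht
      obtain ⟨hpos, hcard⟩ := ih (by omega)
      obtain ⟨i, k, hk, hnash, hveto, hleave, hp⟩ := hstep t (by omega)
      have hsingle := leave_singleton hpos hleave
      have hlt := card_image_update_lt w hk hsingle hnash
      rw [hp]
      exact ⟨pos_update hsymm hpos hveto, by omega⟩
  exact ⟨fun t ht => (hinv t ht).1, by have := (hinv L le_rfl).2; omega⟩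
end

section
/- In a symmetric additively-separable hedonic game, consider any sequence of outcomes in which each outcome is obtained from the previous one by a veto-out feasible deviation (i.e., the deviating player i satisfies w(i,j) < 0 for every j ≠ i in her current coalition with w(i,j) ≠ 0, or has no such j). If at some point of the sequence two players i and j with w(i,j) > 0 belong to the same coalition, then i and j belong to the same coalition in all subsequent outcomes of the sequence. -/
/-- along any sequence of veto-out feasible deviations, once two
players joined by a positive edge are in the same coalition, they remain in the
same coalition in all subsequent outcomes. -/
theorem vetoOut_positive_pairs_locked (V : Type*) [Fintype V] [DecidableEq V]
    (w : V → V → ℝ) (hsymm : ∀ i j, w i j = w j i) (hzero : ∀ i, w i i = 0)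
    (L : ℕ) (p : ℕ → V → ℕ)
    (hstep : ∀ t < L, ∃ (i : V) (k : ℕ), k ≠ p t i ∧
        -- Nash feasible
        coalSum w (p t) i (p t i) < coalSum w (p t) i k ∧
        -- veto-out feasible
        (∀ j : V, p t j = p t i → j ≠ i → w i j ≠ 0 → w i j < 0) ∧
        p (t + 1) = Function.update (p t) i k) :
    ∀ t t' : ℕ, t ≤ t' → t' ≤ L → ∀ i j : V, 0 < w i j →
      p t i = p t j → p t' i = p t' j := by
  intro t t' htt'
  induction t', htt' using Nat.le_induction with
  | base => intro _ i j _ h; exact h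
  | succ n _ ih =>
    intro hn a b hab h
    have hp : p n a = p n b := ih (by omega) a b hab h
    have hne : a ≠ b := by
      rintro rfl
      exact hab.ne' (hzero a)
    obtain ⟨i, k, _, _, hveto, hupd⟩ := hstep n (by omega)
    -- the deviator is neither endpoint: the other one would veto the exit
    have hai : a ≠ i := by
      rintro rfl
      exact (hveto b hp.symm hne.symm hab.ne').not_gt hab
    have hbi : b ≠ i := by
      rintro rfl
      rw [hsymm] at hab
      exact (hveto a hp hne hab.ne').not_gt hab
    rw [hupd, Function.update_of_ne hai, Function.update_of_ne hbi, hp]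
end

section
/- In a symmetric additively-separable hedonic game, consider any sequence of outcomes p₀, p₁, …, p_L (starting from an arbitrary outcome p₀) in which each p_{t+1} is obtained from p_t by a deviation of a player i to a target coalition c that is (a) Nash feasible, (b) veto-out feasible, and (c) such that if c is non-empty then there exists j ∈ c with w(i,j) > 0. Then the length of the sequence satisfies L ≤ 2|V|. -/
/-- Some other member of the coalition of `i` has positive weight to `i`. -/
def HasFriend {V : Type*} (w : V → V → ℝ) (p : V → ℕ) (i : V) : Prop :=
  ∃ j, j ≠ i ∧ p j = p i ∧ 0 < w i j

/-- The coalition of `i` is the singleton `{i}`. -/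
def IsAlone {V : Type*} (p : V → ℕ) (i : V) : Prop :=
  ∀ j, j ≠ i → p j ≠ p i

open Classical in
/-- The level of a player: `2` with a positive weight inside her coalition, `1` if alone, and `0`
otherwise. -/
noncomputable def level {V : Type*} (w : V → V → ℝ) (p : V → ℕ) (i : V) : ℕ :=
  if HasFriend w p i then 2 else if IsAlone p i then 1 else 0

lemma level_le_two {V : Type*} (w : V → V → ℝ) (p : V → ℕ) (i : V) : level w p i ≤ 2 := by
  unfold level; split_ifs <;> omega

lemma coalSum_eq_zero {V : Type*} [Fintype V] [DecidableEq V] (w : V → V → ℝ) (p : V → ℕ)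
    (i : V) (k : ℕ) (h : ∀ j, j ≠ i → p j ≠ k) : coalSum w p i k = 0 := by
  unfold coalSum
  rw [Finset.filter_false_of_mem, Finset.sum_empty]
  rintro j - ⟨hj, hji⟩
  exact h j hji hj

lemma not_hasFriend_of_veto {V : Type*} {w : V → V → ℝ} {p : V → ℕ} {i : V}
    (h : ∀ j : V, p j = p i → j ≠ i → w i j ≠ 0 → w i j < 0) : ¬ HasFriend w p i := by
  rintro ⟨j, hji, hj, hw⟩
  exact lt_asymm hw (h j hj hji hw.ne')

lemma level_lt_update {V : Type*} [Fintype V] [DecidableEq V] {w : V → V → ℝ} {p : V → ℕ}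
    {i : V} {k : ℕ}
    (hnash : coalSum w p i (p i) < coalSum w p i k)
    (hveto : ¬ HasFriend w p i)
    (hpos : (∃ j : V, j ≠ i ∧ p j = k) → ∃ j : V, j ≠ i ∧ p j = k ∧ 0 < w i j) :
    level w p i < level w (Function.update p i k) i := by
  by_cases hne : ∃ j : V, j ≠ i ∧ p j = k
  · have hf : HasFriend w (Function.update p i k) i := by
      obtain ⟨j, hji, hj, hw⟩ := hpos hne
      exact ⟨j, hji, by simp [hji, hj], hw⟩
    unfold level
    rw [if_neg hveto, if_pos hf]
    split_ifs <;> omega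
  · push Not at hne
    have hna : ¬ IsAlone p i := fun ha => by
      rw [coalSum_eq_zero w p i k hne, coalSum_eq_zero w p i _ ha] at hnash
      exact lt_irrefl _ hnash
    have ha : IsAlone (Function.update p i k) i := fun j hji => by
      simpa [hji] using hne j hji
    unfold level
    rw [if_neg hveto, if_neg hna, if_pos ha]
    split_ifs <;> omega

lemma level_le_update {V : Type*} [DecidableEq V] {w : V → V → ℝ}
    (hsymm : ∀ i j, w i j = w j i) {p : V → ℕ} {i : V} {k : ℕ}
    (hveto : ¬ HasFriend w p i)
    (hpos : (∃ j : V, j ≠ i ∧ p j = k) → ∃ j : V, j ≠ i ∧ p j = k ∧ 0 < w i j)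
    {m : V} (hm : m ≠ i) :
    level w p m ≤ level w (Function.update p i k) m := by
  have hfriend : HasFriend w p m → HasFriend w (Function.update p i k) m := by
    rintro ⟨j, hjm, hj, hw⟩
    -- The friend `j` is not the deviator, since she is herself vetoed by `m`.
    have hji : j ≠ i := by
      rintro rfl
      exact hveto ⟨m, hm, hj.symm, hsymm m j ▸ hw⟩
    exact ⟨j, hjm, by simp [hji, hm, hj], hw⟩
  have halone : IsAlone p m →
      HasFriend w (Function.update p i k) m ∨ IsAlone (Function.update p i k) m := by
    intro ha
    by_cases hk : p m = k
    · left
      obtain ⟨j, hji, hj, hw⟩ := hpos ⟨m, hm, hk⟩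
      -- The positive weight of the deviator is to `m`, the only member of the target.
      obtain rfl : j = m := by
        by_contra hjm
        exact ha j hjm (hj.trans hk.symm)
      exact ⟨i, hm.symm, by simp [hm, hk], hsymm i j ▸ hw⟩
    · right
      intro j hjm
      by_cases hji : j = i
      · subst hji
        simpa [hm] using Ne.symm hk
      · simpa [hm, hji] using ha j hjm
  unfold level
  split_ifs <;> first | omega | (exfalso; tauto)

/-- any sequence of deviations that are (a) Nash feasible,
(b) veto-out feasible, and (c) target a nonempty coalition only if the deviator
has a positive edge into it, has length at most `2·|V|`. -/
theorem vetoOut_positive_join_length (V : Type*) [Fintype V] [DecidableEq V]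
    (w : V → V → ℝ) (hsymm : ∀ i j, w i j = w j i) (hzero : ∀ i, w i i = 0)
    (L : ℕ) (p : ℕ → V → ℕ)
    (hstep : ∀ t < L, ∃ (i : V) (k : ℕ), k ≠ p t i ∧
        -- (a) Nash feasible
        coalSum w (p t) i (p t i) < coalSum w (p t) i k ∧
        -- (b) veto-out feasible
        (∀ j : V, p t j = p t i → j ≠ i → w i j ≠ 0 → w i j < 0) ∧
        -- (c) if the target is nonempty, `i` has a positive edge into it
        ((∃ j : V, j ≠ i ∧ p t j = k) → ∃ j : V, j ≠ i ∧ p t j = k ∧ 0 < w i j) ∧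
        p (t + 1) = Function.update (p t) i k) :
    L ≤ 2 * Fintype.card V := by
  have key : ∀ t ≤ L, t ≤ ∑ m, level w (p t) m := by
    intro t
    induction t with
    | zero => intro _; exact Nat.zero_le _
    | succ t ih =>
      intro ht
      obtain ⟨i, k, -, hnash, hveto, hpos, hp⟩ := hstep t ht
      have hv := not_hasFriend_of_veto hveto
      have hi := level_lt_update hnash hv hpos
      have hlt : ∑ m, level w (p t) m < ∑ m, level w (p (t + 1)) m := by
        rw [hp]
        refine Finset.sum_lt_sum (fun m _ => ?_) ⟨i, Finset.mem_univ i, hi⟩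
        by_cases hm : m = i
        · subst hm
          exact hi.le
        · exact level_le_update hsymm hv hpos hm
      have := ih (by omega)
      omega
  calc L ≤ ∑ m, level w (p L) m := key L le_rfl
    _ ≤ ∑ _m : V, 2 := Finset.sum_le_sum fun m _ => level_le_two w (p L) m
    _ = 2 * Fintype.card V := by simp [mul_comm]
end

section
/- In a symmetric additively-separable hedonic game, define the potential Φ(p) = (number of unordered pairs {i,j} with w(i,j) > 0 and p(i) = p(j)) − (number of unordered pairs {i,j} with w(i,j) < 0 and p(i) = p(j)). Let T_in, T_out ≥ 1/2. If outcome p' is obtained from p by a deviation of a player that is Nash feasible, vote-in feasible with threshold T_in, and vote-out feasible with threshold T_out, then Φ(p') ≥ Φ(p). -/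
/-- Number of unordered pairs `{i, j}` of distinct players satisfying the
(symmetric) relation `P`. -/
noncomputable def pairCount {V : Type*} (P : V → V → Prop) : ℕ :=
  Nat.card {e : Sym2 V // ∃ i j : V, e = s(i, j) ∧ i ≠ j ∧ P i j}

/-- The potential `Φ(p)`: the number of unordered pairs of distinct players with a
positive edge lying in a common coalition, minus the number of such pairs with a
negative edge. -/
noncomputable def Phi {V : Type*} (w : V → V → ℝ) (p : V → ℕ) : ℤ :=
  (pairCount (fun i j => 0 < w i j ∧ p i = p j) : ℤ) -
    (pairCount (fun i j => w i j < 0 ∧ p i = p j) : ℤ)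

/-- Number of edges of `i` to the coalition labelled `k` (excluding `i`). -/
noncomputable def edgeCount {V : Type*} (w : V → V → ℝ) (p : V → ℕ) (i : V) (k : ℕ) : ℕ :=
  Nat.card {j : V // p j = k ∧ j ≠ i ∧ w i j ≠ 0}

/-- Number of positive edges of `i` to the coalition labelled `k`. -/
noncomputable def posCount {V : Type*} (w : V → V → ℝ) (p : V → ℕ) (i : V) (k : ℕ) : ℕ :=
  Nat.card {j : V // p j = k ∧ j ≠ i ∧ 0 < w i j}

/-- Number of negative edges of `i` to the coalition labelled `k`. -/
noncomputable def negCount {V : Type*} (w : V → V → ℝ) (p : V → ℕ) (i : V) (k : ℕ) : ℕ :=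
  Nat.card {j : V // p j = k ∧ j ≠ i ∧ w i j < 0}

/-- Pairs satisfying a symmetric relation either avoid `i` or are of the form
`{i, j}` for a unique neighbour `j ≠ i`. -/
lemma pairCount_eq_add {V : Type*} [Finite V] (P : V → V → Prop)
    (hP : ∀ a b, P a b → P b a) (i : V) :
    pairCount P = pairCount (fun a b => a ≠ i ∧ b ≠ i ∧ P a b) +
      Nat.card {j : V // j ≠ i ∧ P i j} := by
  have hinj : Function.Injective (fun j : V => s(i, j)) := fun _ _ h => Sym2.congr_right.1 h
  have hdisj : Disjoint {e : Sym2 V | ∃ a b : V, e = s(a, b) ∧ a ≠ b ∧ a ≠ i ∧ b ≠ i ∧ P a b}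
      ((fun j : V => s(i, j)) '' {j | j ≠ i ∧ P i j}) := by
    rw [Set.disjoint_left]
    rintro _ ⟨a, b, rfl, -, ha, hb, -⟩ ⟨j, -, h⟩
    rcases Sym2.eq_iff.1 h with ⟨h1, -⟩ | ⟨h1, -⟩
    · exact ha h1.symm
    · exact hb h1.symm
  have hunion : {e : Sym2 V | ∃ a b : V, e = s(a, b) ∧ a ≠ b ∧ P a b} =
      {e : Sym2 V | ∃ a b : V, e = s(a, b) ∧ a ≠ b ∧ a ≠ i ∧ b ≠ i ∧ P a b} ∪
      ((fun j : V => s(i, j)) '' {j | j ≠ i ∧ P i j}) := by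
    ext e
    constructor
    · rintro ⟨a, b, rfl, hab, h⟩
      by_cases ha : a = i
      · subst ha
        exact Or.inr ⟨b, ⟨hab.symm, h⟩, rfl⟩
      by_cases hb : b = i
      · subst hb
        exact Or.inr ⟨a, ⟨hab, hP _ _ h⟩, Sym2.eq_swap⟩
      exact Or.inl ⟨a, b, rfl, hab, ha, hb, h⟩
    · rintro (⟨a, b, rfl, hab, -, -, h⟩ | ⟨j, ⟨hj, h⟩, rfl⟩)
      · exact ⟨a, b, rfl, hab, h⟩
      · exact ⟨i, j, rfl, hj.symm, h⟩
  have hcard := congrArg Set.ncard hunion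
  rw [Set.ncard_union_eq hdisj (Set.toFinite _) (Set.toFinite _),
    Set.ncard_image_of_injective _ hinj] at hcard
  exact hcard

/-- Before the deviation, the pairs through `i` counted by `pairCount` are the `Q`-edges of `i`
to her own coalition. -/
lemma pairCount_coalition {V : Type*} [Finite V] (Q : V → V → Prop)
    (hQ : ∀ a b, Q a b → Q b a) (p : V → ℕ) (i : V) :
    pairCount (fun a b => Q a b ∧ p a = p b) =
      pairCount (fun a b => a ≠ i ∧ b ≠ i ∧ Q a b ∧ p a = p b) +
        Nat.card {j : V // p j = p i ∧ j ≠ i ∧ Q i j} := by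
  rw [pairCount_eq_add _ (fun a b h => ⟨hQ a b h.1, h.2.symm⟩) i]
  congr 1
  refine Nat.card_congr (Equiv.subtypeEquivRight fun j => ?_)
  rw [eq_comm (a := p j)]
  tauto

/-- After the deviation, the pairs avoiding `i` are as before, while those through `i` are the
`Q`-edges of `i` to the target coalition of `p`. -/
lemma pairCount_coalition_update {V : Type*} [Finite V] [DecidableEq V] (Q : V → V → Prop)
    (hQ : ∀ a b, Q a b → Q b a) (p : V → ℕ) (i : V) (k : ℕ) :
    pairCount (fun a b => Q a b ∧ Function.update p i k a = Function.update p i k b) =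
      pairCount (fun a b => a ≠ i ∧ b ≠ i ∧ Q a b ∧ p a = p b) +
        Nat.card {j : V // p j = k ∧ j ≠ i ∧ Q i j} := by
  rw [pairCount_coalition Q hQ (Function.update p i k) i]
  congr 1
  · congr 1
    funext a b
    by_cases ha : a = i
    · simp [ha]
    by_cases hb : b = i
    · simp [hb]
    simp [ha, hb]
  · refine Nat.card_congr (Equiv.subtypeEquivRight fun j => ?_)
    by_cases hj : j = i
    · simp [hj]
    simp [hj]

lemma edgeCount_eq_add {V : Type*} [Finite V] (w : V → V → ℝ) (p : V → ℕ) (i : V) (k : ℕ) :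
    edgeCount w p i k = posCount w p i k + negCount w p i k := by
  have hdisj : Disjoint {j : V | p j = k ∧ j ≠ i ∧ 0 < w i j}
      {j : V | p j = k ∧ j ≠ i ∧ w i j < 0} := by
    rw [Set.disjoint_left]
    rintro j ⟨-, -, h⟩ ⟨-, -, h'⟩
    exact lt_asymm h h'
  have hunion : {j : V | p j = k ∧ j ≠ i ∧ w i j ≠ 0} =
      {j : V | p j = k ∧ j ≠ i ∧ 0 < w i j} ∪ {j : V | p j = k ∧ j ≠ i ∧ w i j < 0} := by
    ext j
    simp only [Set.mem_ofPred_eq, Set.mem_union, ne_iff_lt_or_gt (a := w i j)]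
    tauto
  have hcard := congrArg Set.ncard hunion
  rw [Set.ncard_union_eq hdisj (Set.toFinite _) (Set.toFinite _)] at hcard
  exact hcard

/-- A vote with threshold at least `1/2` (vacuous when there are no edges) is won by a weak
majority: `m` edges of which `a` are in favour and `b` against. -/
lemma le_of_vote {T : ℝ} (hT : 1 / 2 ≤ T) {m a b : ℕ} (hm : m = a + b)
    (h : m = 0 ∨ T * (m : ℝ) ≤ (a : ℝ)) : b ≤ a := by
  rcases h with h | h
  · omega
  · have hhalf : 1 / 2 * (m : ℝ) ≤ a :=
      (mul_le_mul_of_nonneg_right hT (Nat.cast_nonneg m)).trans h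
    rw [hm] at hhalf
    push_cast at hhalf
    have : (b : ℝ) ≤ a := by linarith
    exact_mod_cast this

/-- for thresholds `T_in, T_out ≥ 1/2`, a deviation that is Nash
feasible, vote-in feasible with threshold `T_in` and vote-out feasible with
threshold `T_out` does not decrease the potential `Φ`. -/
theorem vote_deviation_Phi_mono (V : Type*) [Fintype V] [DecidableEq V]
    (w : V → V → ℝ) (hsymm : ∀ i j, w i j = w j i) (hzero : ∀ i, w i i = 0)
    (Tin Tout : ℝ) (hTin : 1 / 2 ≤ Tin) (hTout : 1 / 2 ≤ Tout)
    (p : V → ℕ) (i : V) (k : ℕ) (hk : k ≠ p i)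
    -- Nash feasible
    (hnash : coalSum w p i (p i) < coalSum w p i k)
    -- vote-in feasible with threshold `T_in`
    (hvin : edgeCount w p i k = 0 ∨
      Tin * (edgeCount w p i k : ℝ) ≤ (posCount w p i k : ℝ))
    -- vote-out feasible with threshold `T_out`
    (hvout : edgeCount w p i (p i) = 0 ∨
      Tout * (edgeCount w p i (p i) : ℝ) ≤ (negCount w p i (p i) : ℝ)) :
    Phi w p ≤ Phi w (Function.update p i k) := by
  have hin := le_of_vote hTin (edgeCount_eq_add w p i k) hvin
  have hout := le_of_vote hTout ((edgeCount_eq_add w p i (p i)).trans (add_comm _ _)) hvout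
  have hpos : ∀ a b, 0 < w a b → 0 < w b a := fun a b h => hsymm a b ▸ h
  have hneg : ∀ a b, w a b < 0 → w b a < 0 := fun a b h => hsymm a b ▸ h
  unfold posCount negCount at hin hout
  unfold Phi
  rw [pairCount_coalition (fun a b => 0 < w a b) hpos p i,
    pairCount_coalition (fun a b => w a b < 0) hneg p i,
    pairCount_coalition_update (fun a b => 0 < w a b) hpos p i k,
    pairCount_coalition_update (fun a b => w a b < 0) hneg p i k]
  push_cast
  omega
end

section
/- Let (V, w) be a symmetric additively-separable hedonic game, let W > Σ_{{i,j}} |w(i,j)| (sum over unordered pairs of distinct players) and M > |V|·W, and form the augmented game on V ∪ {s, t} by setting w'(v,s) = w'(v,t) = W for every v ∈ V, w'(s,t) = −M, and w' = w on V × V. Then an outcome p of the augmented game is Nash stable if and only if p consists of exactly the two coalitions V_s ∪ {s} and V_t ∪ {t} for some partition (V_s, V_t) of V that is a stable party affiliation for (V, w), i.e., Σ_{u ∈ V_s} w(v,u) ≥ Σ_{u ∈ V_t} w(v,u) for every v ∈ V_s and Σ_{u ∈ V_t} w(v,u) ≥ Σ_{u ∈ V_s} w(v,u) for every v ∈ V_t.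 In particular, in every Nash-stable outcome s and t are in different coalitions and every v ∈ V is in the coalition of s or of t. -/
/-- Each row sum of `|w|` appears twice in the double sum: as a row and as a column. -/
lemma row_lt {V : Type*} [Fintype V] [DecidableEq V]
    (w : V → V → ℝ) (hsymm : ∀ i j, w i j = w j i) (hzero : ∀ i, w i i = 0) (W : ℝ)
    (hW : ∑ i : V, ∑ j : V, |w i j| < 2 * W) (v : V) : ∑ u, |w v u| < W := by
  have h1 := Finset.add_sum_erase Finset.univ (fun i => ∑ j, |w i j|) (Finset.mem_univ v)
  have h2 := Finset.add_sum_erase Finset.univ (fun i => |w i v|) (Finset.mem_univ v)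
  have h3 : ∑ i ∈ Finset.univ.erase v, |w i v| ≤ ∑ i ∈ Finset.univ.erase v, ∑ j, |w i j| :=
    Finset.sum_le_sum fun i _ =>
      Finset.single_le_sum (f := fun j => |w i j|) (fun j _ => abs_nonneg _) (Finset.mem_univ v)
  have h4 : ∑ u, |w v u| = ∑ u, |w u v| := Finset.sum_congr rfl fun u _ => by rw [hsymm]
  simp only [hzero, abs_zero, zero_add] at h1 h2
  linarith

/-- Moving between two distinct coalitions changes the original weight by less than `W`. -/
lemma sub_lt {V : Type*} [Fintype V] [DecidableEq V]
    (w : V → V → ℝ) (hsymm : ∀ i j, w i j = w j i) (hzero : ∀ i, w i i = 0) (W : ℝ)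
    (hW : ∑ i : V, ∑ j : V, |w i j| < 2 * W) (q : V → ℕ) (v : V) {k l : ℕ} (hkl : k ≠ l) :
    ∑ u ∈ Finset.univ.filter (fun u => q u = k), w v u -
      ∑ u ∈ Finset.univ.filter (fun u => q u = l), w v u < W := by
  refine lt_of_le_of_lt ?_ (row_lt w hsymm hzero W hW v)
  rw [Finset.sum_filter, Finset.sum_filter, ← Finset.sum_sub_distrib]
  refine Finset.sum_le_sum fun u _ => ?_
  have h1 := le_abs_self (w v u)
  have h2 := neg_abs_le (w v u)
  have h3 := abs_nonneg (w v u)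
  split_ifs with h h'
  · exact absurd (h.symm.trans h') hkl
  all_goals linarith

lemma coalSum_inl {V : Type*} [Fintype V] [DecidableEq V]
    (w : V → V → ℝ) (hzero : ∀ i, w i i = 0) (W : ℝ)
    (w' : V ⊕ Bool → V ⊕ Bool → ℝ)
    (hw'orig : ∀ u v : V, w' (Sum.inl u) (Sum.inl v) = w u v)
    (hw'super : ∀ (v : V) (b : Bool), w' (Sum.inl v) (Sum.inr b) = W)
    (p : V ⊕ Bool → ℕ) (v : V) (k : ℕ) :
    coalSum w' p (Sum.inl v) k =
      ∑ u ∈ Finset.univ.filter (fun u : V => p (Sum.inl u) = k), w v u +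
        ((if p (Sum.inr false) = k then W else 0) + (if p (Sum.inr true) = k then W else 0)) := by
  unfold coalSum
  rw [Finset.sum_filter, Finset.sum_filter, Fintype.sum_sum_type, Fintype.sum_bool]
  simp only [hw'orig, hw'super, ne_eq, reduceCtorEq, not_false_eq_true, and_true]
  congr 1
  · refine Finset.sum_congr rfl fun u _ => ?_
    by_cases hu : u = v
    · subst hu; simp [hzero]
    · simp [hu]
  · ring

lemma coalSum_inr {V : Type*} [Fintype V] [DecidableEq V] (W M : ℝ)
    (w' : V ⊕ Bool → V ⊕ Bool → ℝ)
    (hw'super : ∀ (v : V) (b : Bool), w' (Sum.inr b) (Sum.inl v) = W)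
    (hw'st : ∀ b b' : Bool, w' (Sum.inr b) (Sum.inr b') = if b = b' then 0 else -M)
    (p : V ⊕ Bool → ℕ) (b : Bool) (k : ℕ) :
    coalSum w' p (Sum.inr b) k =
      ((Finset.univ.filter (fun u : V => p (Sum.inl u) = k)).card : ℝ) * W +
        (if p (Sum.inr !b) = k then -M else 0) := by
  unfold coalSum
  rw [Finset.sum_filter, Fintype.sum_sum_type, Fintype.sum_bool]
  simp only [hw'super, hw'st, ne_eq, reduceCtorEq, not_false_eq_true, and_true]
  rw [← Finset.sum_filter, Finset.sum_const, nsmul_eq_mul]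
  cases b <;> simp

/-- supernode reduction from party affiliation to Nash stability.
With `W` greater than the sum of `|w i j|` over unordered pairs (equivalently
`Σ_i Σ_j |w i j| < 2W`, as `w i i = 0`) and `M > |V|·W`, augment the game by two
supernodes `s, t`, each tied to every original player by weight `W` and to each
other by weight `-M`.  Then an outcome of the augmented game is Nash stable iff it
consists of exactly the two coalitions `V_s ∪ {s}` and `V_t ∪ {t}`, where
`(V_s, V_t)` partitions `V` and is a stable party affiliation for `(V, w)`. -/
theorem nash_stable_iff_party_affiliation (V : Type*) [Fintype V] [DecidableEq V]
    (w : V → V → ℝ) (hsymm : ∀ i j, w i j = w j i) (hzero : ∀ i, w i i = 0)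
    (W M : ℝ)
    (hW : ∑ i : V, ∑ j : V, |w i j| < 2 * W)
    (hM : (Fintype.card V : ℝ) * W < M)
    (w' : V ⊕ Bool → V ⊕ Bool → ℝ)
    (hw'orig : ∀ u v : V, w' (Sum.inl u) (Sum.inl v) = w u v)
    (hw'super : ∀ (v : V) (b : Bool),
      w' (Sum.inl v) (Sum.inr b) = W ∧ w' (Sum.inr b) (Sum.inl v) = W)
    (hw'st : ∀ b b' : Bool, w' (Sum.inr b) (Sum.inr b') = if b = b' then 0 else -M)
    (p : V ⊕ Bool → ℕ) :
    (∀ (i : V ⊕ Bool) (k : ℕ), k ≠ p i →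
        ¬ coalSum w' p i (p i) < coalSum w' p i k) ↔
      (p (Sum.inr false) ≠ p (Sum.inr true) ∧
        (∀ v : V, p (Sum.inl v) = p (Sum.inr false) ∨
          p (Sum.inl v) = p (Sum.inr true)) ∧
        (∀ v : V, p (Sum.inl v) = p (Sum.inr false) →
          ∑ u ∈ Finset.univ.filter
              (fun u : V => p (Sum.inl u) = p (Sum.inr true)), w v u ≤
            ∑ u ∈ Finset.univ.filter
              (fun u : V => p (Sum.inl u) = p (Sum.inr false)), w v u) ∧
        (∀ v : V, p (Sum.inl v) = p (Sum.inr true) →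
          ∑ u ∈ Finset.univ.filter
              (fun u : V => p (Sum.inl u) = p (Sum.inr false)), w v u ≤
            ∑ u ∈ Finset.univ.filter
              (fun u : V => p (Sum.inl u) = p (Sum.inr true)), w v u)) := by
  have hW0 : 0 < W := by
    have : 0 ≤ ∑ i : V, ∑ j : V, |w i j| :=
      Finset.sum_nonneg fun i _ => Finset.sum_nonneg fun j _ => abs_nonneg _
    linarith
  have hl := coalSum_inl w hzero W w' hw'orig (fun v b => (hw'super v b).1) p
  have hr := coalSum_inr W M w' (fun v b => (hw'super v b).2) hw'st p
  have hd := fun v k l (h : k ≠ l) =>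
    sub_lt w hsymm hzero W hW (fun u => p (Sum.inl u)) v h
  have hc : ∀ k, ((Finset.univ.filter (fun u : V => p (Sum.inl u) = k)).card : ℝ) * W < M :=
    fun k => lt_of_le_of_lt
      (mul_le_mul_of_nonneg_right (by exact_mod_cast Finset.card_le_univ _) hW0.le) hM
  have hc0 : ∀ k, 0 ≤ ((Finset.univ.filter (fun u : V => p (Sum.inl u) = k)).card : ℝ) * W :=
    fun k => mul_nonneg (Nat.cast_nonneg _) hW0.le
  constructor
  · intro h
    have hst : p (Sum.inr false) ≠ p (Sum.inr true) := by
      intro e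
      -- An unused label represents the empty target coalition.
      obtain ⟨k, hk⟩ := Infinite.exists_notMem_finset (Finset.univ.image p)
      have hk' : ∀ x, p x ≠ k := fun x hx =>
        hk (Finset.mem_image.2 ⟨x, Finset.mem_univ _, hx⟩)
      have h1 := h (Sum.inr false) k (hk' _).symm
      rw [hr, hr] at h1
      have h2 := hc (p (Sum.inr false))
      simp only [Bool.not_false, e, hk', if_true, if_false, Finset.filter_false,
        Finset.card_empty, Nat.cast_zero, zero_mul] at h1 h2
      linarith
    refine ⟨hst, fun v => ?_, fun v hv => ?_, fun v hv => ?_⟩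
    · by_contra! hv
      have h1 := h (Sum.inl v) (p (Sum.inr false)) hv.1.symm
      rw [hl, hl] at h1
      have h2 := hd v _ _ hv.1
      simp only [hv.1.symm, hv.2.symm, hst.symm, if_true, if_false] at h1 h2
      linarith
    · have h1 := h (Sum.inl v) (p (Sum.inr true)) (by rw [hv]; exact hst.symm)
      rw [hl, hl] at h1
      simp only [hv, hst, hst.symm, if_true, if_false] at h1
      linarith
    · have h1 := h (Sum.inl v) (p (Sum.inr false)) (by rw [hv]; exact hst)
      rw [hl, hl] at h1
      simp only [hv, hst, hst.symm, if_true, if_false] at h1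
      linarith
  · rintro ⟨hst, hV, hs, ht⟩ i k hk
    rw [not_lt]
    -- Labels other than those of `s` and `t` contain no original player.
    have hempty : p (Sum.inr false) ≠ k → p (Sum.inr true) ≠ k →
        Finset.univ.filter (fun u : V => p (Sum.inl u) = k) = ∅ := by
      intro h1 h2
      refine Finset.filter_eq_empty_iff.2 fun u _ hu => ?_
      rcases hV u with e | e
      · exact h1 (e.symm.trans hu)
      · exact h2 (e.symm.trans hu)
    rcases i with v | b
    · rw [hl, hl]
      have h2 := hd v _ _ hk
      rcases hV v with e | e
      · have hk1 : p (Sum.inr false) ≠ k := fun h => hk (h.symm.trans e.symm)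
        have h3 := hs v e
        by_cases hk2 : p (Sum.inr true) = k
        · subst hk2
          simp only [e, hst, hst.symm, if_true, if_false]
          linarith
        · simp only [e, hk1, hk2, hst.symm, if_true, if_false] at h2 ⊢
          linarith
      · have hk1 : p (Sum.inr true) ≠ k := fun h => hk (h.symm.trans e.symm)
        have h3 := ht v e
        by_cases hk2 : p (Sum.inr false) = k
        · subst hk2
          simp only [e, hst, hst.symm, if_true, if_false]
          linarith
        · simp only [e, hk1, hk2, hst, if_true, if_false] at h2 ⊢
          linarith
    · rw [hr, hr]
      have hb : p (Sum.inr !b) ≠ p (Sum.inr b) := by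
        cases b
        · exact hst.symm
        · exact hst
      have h1 := hc0 (p (Sum.inr b))
      have h2 := hc k
      rw [if_neg hb]
      split_ifs with h3
      · linarith
      · have : Finset.univ.filter (fun u : V => p (Sum.inl u) = k) = ∅ := by
          cases b
          · exact hempty hk.symm h3
          · exact hempty h3 hk.symm
        rw [this, Finset.card_empty, Nat.cast_zero, zero_mul]
        linarith
end

section
/- Let (V, w) be a symmetric additively-separable hedonic game with integer weights satisfying w(i,j) ≤ 0 for all i, j, and let σ_i = Σ_{j ∈ V} w(i,j) (so σ_i ≤ 0). Form the augmented rational-weighted game on V ∪ {s, t} by setting w'(i,s) = w'(i,t) = −σ_i/2 + 1/4 for every i ∈ V, w'(s,t) = −M with M > Σ_{i ∈ V}(−σ_i/2 + 1/4), and w' = w on V × V. Suppose p is an outcome of the augmented game in which no player has a deviation that is simultaneously Nash feasible, sum-in feasible, and sum-out feasible. Then: s and t lie in different coalitions of p; every i ∈ V lies in the coalition of s or of t; and, writing V₁ for the original players with s and V₂ for those with t, the partition (V₁, V₂) is a stable party affiliation for (V, w), i.e., Σ_{u ∈ V₁} w(i,u) ≥ Σ_{u ∈ V₂} w(i,u)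 for every i ∈ V₁ and symmetrically for every i ∈ V₂. -/
/-!
Write `σ i = ∑ j, w i j`, `c i = -σ i / 2 + 1 / 4 > 0` for the weight of `i` to a supernode, and
`A i k ≤ 0` for the `w`-weight of `i` to the original players labelled `k`.

* If `s` and `t` shared a coalition, the utility of `s` would be at most `∑ i, c i - M < 0`, and `s`
  could leave for an empty coalition.
* If `i` were with neither supernode, her utility would be `A i (p i) ≤ 0`, while her weights to the
  coalitions of `s` and `t` add up to at least `σ i + 2 * c i = 1 / 2`; one of them is positive and
  is a feasible target.
* Hence the weights `a`, `b` of `i` to her own and to the other side satisfy `a + b = σ i`. If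
  `a < b`, integrality gives `a + 1 ≤ b`, so `a + c i ≤ -1 / 4 < 0` and `b + c i ≥ 3 / 4 > 0`, and
  switching sides is feasible.
-/

/-!
The augmented (rational-weighted) game lives on the player set `V ⊕ Bool`, where
`Sum.inr false` is the supernode `s` and `Sum.inr true` is the supernode `t`.
Partitions are encoded as labellings `p : V ⊕ Bool → ℕ` (fibres are the
coalitions).  A deviation of player `i` is the choice of a label `k ≠ p i`
(a nonempty fibre is a block of `p` other than `p(i)`, an empty fibre the empty
target coalition); it is Nash feasible if the weight of `i` to the target exceeds
her current utility, sum-in feasible if moreover that weight is `≥ 0`, and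
sum-out feasible if moreover her current utility is `≤ 0`.
-/

/-- Sum of weights from player `i` to the members of the coalition labelled `k`
(excluding `i` herself); `coalSumQ w p i (p i)` is the utility of `i` under `p`. -/
def coalSumQ {V Λ : Type*} [Fintype V] [DecidableEq V] [DecidableEq Λ]
    (w : V → V → ℚ) (p : V → Λ) (i : V) (k : Λ) : ℚ :=
  ∑ j ∈ Finset.univ.filter (fun j => p j = k ∧ j ≠ i), w i j

/-- When players have weight zero to themselves, the exclusion of `i` from the coalition sum is
immaterial, and the sum splits into original players and the two supernodes. -/
lemma coalSumQ_split {V : Type*} [Fintype V] [DecidableEq V]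
    (w' : V ⊕ Bool → V ⊕ Bool → ℚ) (p : V ⊕ Bool → ℕ) (i : V ⊕ Bool) (k : ℕ)
    (hi : w' i i = 0) :
    coalSumQ w' p i k =
      (∑ v ∈ Finset.univ.filter (fun v : V => p (Sum.inl v) = k), w' i (Sum.inl v)) +
      ((if p (Sum.inr false) = k then w' i (Sum.inr false) else 0) +
       (if p (Sum.inr true) = k then w' i (Sum.inr true) else 0)) := by
  have h : coalSumQ w' p i k = ∑ j, if p j = k then w' i j else 0 := by
    unfold coalSumQ
    rw [Finset.sum_filter]
    refine Finset.sum_congr rfl fun j _ => ?_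
    by_cases hj : j = i
    · subst hj
      simp [hi]
    · simp [hj]
  rw [h, Fintype.sum_sum_type, Fintype.sum_bool, Finset.sum_filter]
  ring

/-- For nonpositive weights, the total over two disjoint parts is at least the total over
everything. -/
lemma sum_le_two_parts {V : Type*} [Fintype V] (f : V → ℤ) (hf : ∀ v, f v ≤ 0)
    (q : V → ℕ) {a b : ℕ} (hab : a ≠ b) :
    ∑ v, f v ≤ ∑ v ∈ Finset.univ.filter (fun v => q v = a), f v +
      ∑ v ∈ Finset.univ.filter (fun v => q v = b), f v := by
  rw [Finset.sum_filter, Finset.sum_filter, ← Finset.sum_add_distrib]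
  refine Finset.sum_le_sum fun v _ => ?_
  have := hf v
  split_ifs <;> omega

lemma sum_eq_two_parts {V : Type*} [Fintype V] (f : V → ℤ)
    (q : V → ℕ) {a b : ℕ} (hab : a ≠ b) (hq : ∀ v, q v = a ∨ q v = b) :
    ∑ v, f v = ∑ v ∈ Finset.univ.filter (fun v => q v = a), f v +
      ∑ v ∈ Finset.univ.filter (fun v => q v = b), f v := by
  rw [Finset.sum_filter, Finset.sum_filter, ← Finset.sum_add_distrib]
  refine Finset.sum_congr rfl fun v _ => ?_
  have := hq v
  split_ifs <;> omega

/-- supernode reduction from party affiliation to sumCIS.  The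
original game has integer nonpositive symmetric weights `w`; with
`σ_i = Σ_j w i j`, the augmented game ties each original player `i` to each of the
two supernodes `s, t` with weight `-σ_i/2 + 1/4`, and `s` to `t` with weight `-M`
where `M > Σ_i (-σ_i/2 + 1/4)`.  If in an outcome `p` of the augmented game no
player has a deviation that is simultaneously Nash, sum-in and sum-out feasible,
then `s` and `t` are in different coalitions, every original player is with `s` or
with `t`, and the induced bipartition `(V₁, V₂)` of `V` is a stable party
affiliation for `(V, w)`. -/
theorem sumCIS_reduction (V : Type*) [Fintype V] [DecidableEq V]
    (w : V → V → ℤ) (hsymm : ∀ i j, w i j = w j i) (hzero : ∀ i, w i i = 0)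
    (hnonpos : ∀ i j, w i j ≤ 0)
    (M : ℚ)
    (hM : ∑ i : V, (-((∑ j : V, (w i j : ℚ))) / 2 + 1 / 4) < M)
    (w' : V ⊕ Bool → V ⊕ Bool → ℚ)
    (hw'orig : ∀ u v : V, w' (Sum.inl u) (Sum.inl v) = (w u v : ℚ))
    (hw'super : ∀ (i : V) (b : Bool),
      w' (Sum.inl i) (Sum.inr b) = -((∑ j : V, (w i j : ℚ))) / 2 + 1 / 4 ∧
      w' (Sum.inr b) (Sum.inl i) = -((∑ j : V, (w i j : ℚ))) / 2 + 1 / 4)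
    (hw'st : ∀ b b' : Bool, w' (Sum.inr b) (Sum.inr b') = if b = b' then 0 else -M)
    (p : V ⊕ Bool → ℕ)
    -- no deviation is simultaneously Nash, sum-in and sum-out feasible
    (hstable : ∀ (i : V ⊕ Bool) (k : ℕ), k ≠ p i →
      ¬ (coalSumQ w' p i (p i) < coalSumQ w' p i k ∧
          0 ≤ coalSumQ w' p i k ∧ coalSumQ w' p i (p i) ≤ 0)) :
    p (Sum.inr false) ≠ p (Sum.inr true) ∧
      (∀ i : V, p (Sum.inl i) = p (Sum.inr false) ∨
        p (Sum.inl i) = p (Sum.inr true)) ∧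
      (∀ i : V, p (Sum.inl i) = p (Sum.inr false) →
        ∑ u ∈ Finset.univ.filter
            (fun u : V => p (Sum.inl u) = p (Sum.inr true)), w i u ≤
          ∑ u ∈ Finset.univ.filter
            (fun u : V => p (Sum.inl u) = p (Sum.inr false)), w i u) ∧
      (∀ i : V, p (Sum.inl i) = p (Sum.inr true) →
        ∑ u ∈ Finset.univ.filter
            (fun u : V => p (Sum.inl u) = p (Sum.inr false)), w i u ≤
          ∑ u ∈ Finset.univ.filter
            (fun u : V => p (Sum.inl u) = p (Sum.inr true)), w i u) := by
  have hin : ∀ (i : V) (k : ℕ), coalSumQ w' p (Sum.inl i) k =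
      ((∑ v ∈ Finset.univ.filter (fun v : V => p (Sum.inl v) = k), w i v : ℤ) : ℚ) +
      ((if p (Sum.inr false) = k then -((∑ j : V, w i j : ℤ) : ℚ) / 2 + 1 / 4 else 0) +
       (if p (Sum.inr true) = k then -((∑ j : V, w i j : ℤ) : ℚ) / 2 + 1 / 4 else 0)) := by
    intro i k
    rw [coalSumQ_split w' p _ k (by simp [hw'orig, hzero])]
    simp only [hw'orig, (hw'super i _).1]
    push_cast
    rfl
  have hne : p (Sum.inr false) ≠ p (Sum.inr true) := by
    intro heq
    obtain ⟨k, hk⟩ := Infinite.exists_notMem_finset (Finset.univ.image p)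
    have hk' : ∀ j, p j ≠ k := fun j hj =>
      hk (Finset.mem_image.2 ⟨j, Finset.mem_univ _, hj⟩)
    have h0 : coalSumQ w' p (Sum.inr false) k = 0 := by
      simp [coalSumQ, hk']
    have h1 : coalSumQ w' p (Sum.inr false) (p (Sum.inr false)) < 0 := by
      rw [coalSumQ_split w' p _ _ (by simp [hw'st])]
      simp only [hw'st, (hw'super _ _).2, heq]
      have hle := Finset.sum_le_univ_sum_of_nonneg
        (f := fun i : V => -((∑ j : V, (w i j : ℚ))) / 2 + 1 / 4)
        (s := Finset.univ.filter (fun v : V => p (Sum.inl v) = p (Sum.inr true)))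
        (fun i => by
          have : ∑ j : V, (w i j : ℚ) ≤ 0 :=
            Finset.sum_nonpos fun j _ => by exact_mod_cast hnonpos i j
          linarith)
      simp only [if_true, Bool.false_eq_true, Bool.true_eq_false, if_false] at *
      linarith
    exact hstable _ k (hk' _).symm ⟨by rw [h0]; exact h1, h0.ge, h1.le⟩
  have hcov : ∀ i : V, p (Sum.inl i) = p (Sum.inr false) ∨
      p (Sum.inl i) = p (Sum.inr true) := by
    intro i
    by_contra! hcon
    obtain ⟨hs, ht⟩ := hcon
    have e0 := hin i (p (Sum.inl i))
    have es := hin i (p (Sum.inr false))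
    have et := hin i (p (Sum.inr true))
    have hA : (∑ v ∈ Finset.univ.filter (fun v : V => p (Sum.inl v) = p (Sum.inl i)), w i v) ≤ 0 :=
      Finset.sum_nonpos fun j _ => hnonpos i j
    have hst := sum_le_two_parts (w i) (hnonpos i) (fun v => p (Sum.inl v)) hne
    rw [if_neg hs.symm, if_neg ht.symm] at e0
    rw [if_pos rfl, if_neg hne.symm] at es
    rw [if_neg hne, if_pos rfl] at et
    have hAq := (Int.cast_le (R := ℚ)).2 hA
    have hstq := (Int.cast_le (R := ℚ)).2 hst
    rw [Int.cast_zero] at hAq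
    rw [Int.cast_add] at hstq
    have h1 := hstable (Sum.inl i) _ hs.symm
    have h2 := hstable (Sum.inl i) _ ht.symm
    by_cases hpos : 0 < coalSumQ w' p (Sum.inl i) (p (Sum.inr false))
    · exact h1 ⟨by linarith, hpos.le, by linarith⟩
    · exact h2 ⟨by linarith, by linarith, by linarith⟩
  -- The last two claims are symmetric under exchanging the supernodes.
  have key : ∀ (i : V) (a b : ℕ), a ≠ b → (∀ v : V, p (Sum.inl v) = a ∨ p (Sum.inl v) = b) →
      (∀ k, k = a ∨ k = b → coalSumQ w' p (Sum.inl i) k =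
        ((∑ v ∈ Finset.univ.filter (fun v : V => p (Sum.inl v) = k), w i v : ℤ) : ℚ) +
        (-((∑ j : V, w i j : ℤ) : ℚ) / 2 + 1 / 4)) →
      p (Sum.inl i) = a →
      ∑ u ∈ Finset.univ.filter (fun u : V => p (Sum.inl u) = b), w i u ≤
        ∑ u ∈ Finset.univ.filter (fun u : V => p (Sum.inl u) = a), w i u := by
    intro i a b hab hq hsum hia
    by_contra! hlt
    have ea := hsum a (Or.inl rfl)
    have eb := hsum b (Or.inr rfl)
    have htot := congrArg (Int.cast (R := ℚ))
      (sum_eq_two_parts (w i) (fun v => p (Sum.inl v)) hab hq)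
    have hltq := (Int.cast_le (R := ℚ)).2 (Int.add_one_le_iff.2 hlt)
    rw [Int.cast_add] at htot
    rw [Int.cast_add, Int.cast_one] at hltq
    apply hstable (Sum.inl i) b (by rw [hia]; exact hab.symm)
    rw [hia]
    exact ⟨by linarith, by linarith, by linarith⟩
  refine ⟨hne, hcov, fun i hi => key i _ _ hne hcov ?_ hi,
    fun i hi => key i _ _ hne.symm (fun v => (hcov v).symm) ?_ hi⟩
  · rintro k (rfl | rfl) <;> rw [hin] <;> simp [hne, hne.symm]
  · rintro k (rfl | rfl) <;> rw [hin] <;> simp [hne, hne.symm]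
end
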